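/- Let μ ∈ (0,∞) be fixed and let F_T be a probability distribution on [0,∞) (the distribution of a nonnegative random variable T). Then 0 ≤ E[T] < 1 holds if and only if the functional equation of compound-exponential type F̂(s) = 1/(1 + σ(s)) for all s ≥ 0 has exactly one solution: a probability distribution F on [0,∞) with mean μ and finite second moment (here σ is built from the unknown F, F_T and μ). Moreover, the unique solution F satisfies Var[F] = ((1 + E[T])/(1 − E[T]))·μ². -/

import Mathlib

/-!
For a probability measure `F` on `[0,∞)`, having mean `μ` and second moment at most `C` amounts to the
bounds `1 - μ s ≤ F̂(s) ≤ 1 - μ s + C s² / 2` for all `s ≥ 0` (`Band`), and the whole argument runs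
on these bounds.

*Necessity and variance.* Put `k(s) = 2 (F̂(s) - 1 + μ s) / s²`, which tends to the second moment
`m₂` of `F` as `s → 0+`. The functional equation expresses `∫ t k(ts) dF_T(t)` through `k(s)`, and
the expression tends to `m₂ - 2 μ²`. Fatou's lemma shows first that `E[T]` is finite, and then
dominated convergence gives `m₂ E[T] = m₂ - 2 μ²`, that is `m₂ (1 - E[T]) = 2 μ²`
(`second_moment`). Since `m₂ ≥ 0` and `μ > 0`, this forces `E[T] < 1`, and it determines the
variance `m₂ - μ²`.

*Uniqueness.* If `|F̂(s) - Ĝ(s)| ≤ K s²` for two solutions, then the equation improves the bound to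
`K E[T] s²`. Iterating gives `F̂ = Ĝ`, so `F = G` (`sol_unique`, `LS_injective`).

*Existence.* If `T ≥ ε > 0`, then `λ = E[1/T]` is finite and the equation reads
`(1 + λ) F̂(s) = 1 + F̂(s) ∫ F̂(ts)/t dF_T(t)`. The right-hand side divided by `1 + λ` is again the
transform of a probability measure, a mixture of `δ₀` and a convolution (`step`); the operation is
monotone in `F̂` and preserves the band as soon as `C (1 - E[T]) ≥ 2 μ²`. Started at `δ_μ` it
increases, and tightness provides a limit in the same band (`exists_of_bounded_below`). For general
`T` with `E[T] < 1`, the solutions for `max T ε` lie in a common band, and a limit point as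
`ε → 0` solves the equation for `T` (`exists_sol`).
-/

open MeasureTheory

/-- Laplace–Stieltjes transform of a (nonnegative) probability distribution. -/
noncomputable def LS (F : Measure ℝ) (s : ℝ) : ℝ := ∫ x, Real.exp (-(s * x)) ∂F

/-- `σ(s) = ∫₀^∞ (1 − F̂(ts))/t dF_T(t)`, with the integrand at `t = 0` equal to `μ s`. -/
noncomputable def sigmaT (F FT : Measure ℝ) (μ : ℝ) (s : ℝ) : ℝ :=
  ∫ t, (if t = 0 then μ * s else (1 - LS F (t * s)) / t) ∂FT

/-- `F` is a solution: a probability distribution on `[0,∞)` with mean `μ`, finite second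
moment, satisfying the compound-exponential type equation `F̂(s) = 1/(1 + σ(s))`
for all `s ≥ 0`. -/
def Sol (FT : Measure ℝ) (μ : ℝ) (F : Measure ℝ) : Prop :=
  IsProbabilityMeasure F ∧ F (Set.Iio 0) = 0 ∧ (∫ x, x ∂F) = μ ∧
  Integrable (fun x => x ^ 2) F ∧
  ∀ s : ℝ, 0 ≤ s → LS F s = 1 / (1 + sigmaT F FT μ s)

open Filter Topology Set

/-! ### Transforms and moments -/

lemma ae_nonneg_of_null {F : Measure ℝ} (h : F (Set.Iio 0) = 0) : ∀ᵐ x ∂F, 0 ≤ x := by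
  rw [ae_iff]
  convert h using 2
  ext x
  simp

lemma exp_neg_le_quad {u : ℝ} (hu : 0 ≤ u) : Real.exp (-u) ≤ 1 - u + u ^ 2 / 2 := by
  have h1 := Real.quadratic_le_exp_of_nonneg hu
  have h2 : Real.exp (-u) * Real.exp u = 1 := by rw [← Real.exp_add]; simp
  have h3 := Real.exp_pos (-u)
  have h4 : Real.exp (-u) * (1 + u + u ^ 2 / 2) ≤ 1 := by
    calc _ ≤ Real.exp (-u) * Real.exp u := by gcongr
      _ = 1 := h2
  have h5 : (1 - u + u ^ 2 / 2) * (1 + u + u ^ 2 / 2) ≥ 1 := by nlinarith [sq_nonneg (u ^ 2)]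
  have h6 : 0 < 1 + u + u ^ 2 / 2 := by positivity
  exact le_of_mul_le_mul_right (h4.trans h5) h6

lemma one_sub_le_exp_neg' (u : ℝ) : 1 - u ≤ Real.exp (-u) := by
  linarith [Real.add_one_le_exp (-u)]

section LSbasic

variable {F : Measure ℝ} [IsProbabilityMeasure F]

lemma integrable_exp_neg (h : F (Set.Iio 0) = 0) {s : ℝ} (hs : 0 ≤ s) :
    Integrable (fun x => Real.exp (-(s * x))) F := by
  refine Integrable.of_bound (C := 1) (by fun_prop) ?_
  filter_upwards [ae_nonneg_of_null h] with x hx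
  rw [Real.norm_eq_abs, abs_of_pos (Real.exp_pos _)]
  exact Real.exp_le_one_iff.2 (by simpa using mul_nonneg hs hx)

omit [IsProbabilityMeasure F] in
lemma LS_nonneg (s : ℝ) : 0 ≤ LS F s := integral_nonneg fun _ => (Real.exp_pos _).le

lemma LS_le_one (h : F (Set.Iio 0) = 0) {s : ℝ} (hs : 0 ≤ s) : LS F s ≤ 1 := by
  have : LS F s ≤ ∫ _x, (1 : ℝ) ∂F := by
    refine integral_mono_ae (integrable_exp_neg h hs) (integrable_const _) ?_
    filter_upwards [ae_nonneg_of_null h] with x hx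
    exact Real.exp_le_one_iff.2 (by simpa using mul_nonneg hs hx)
  simpa using this

lemma LS_zero : LS F 0 = 1 := by simp [LS]

lemma measurable_LS : Measurable (LS F) := by
  have : StronglyMeasurable (fun p : ℝ × ℝ => Real.exp (-(p.1 * p.2))) := by
    refine Measurable.stronglyMeasurable ?_
    fun_prop
  exact this.integral_prod_right.measurable

end LSbasic

/-- The transform of `F` lies between `1 - μ s` and `1 - μ s + C s² / 2`. For a probability
measure on `[0,∞)` this says that the mean is `μ` and the second moment is at most `C`
(`moments_of_band`); unlike the moment conditions, it is visibly closed under pointwise limits of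
transforms. -/
def Band (μ C : ℝ) (F : Measure ℝ) : Prop :=
  ∀ s : ℝ, 0 ≤ s → 1 - μ * s ≤ LS F s ∧ LS F s ≤ 1 - μ * s + C * s ^ 2 / 2

/-- The second-order difference quotient of `e^{-sx}` in `s`. -/
noncomputable def quo (s x : ℝ) : ℝ := 2 * (Real.exp (-(s * x)) - 1 + s * x) / s ^ 2

lemma quo_nonneg (s x : ℝ) : 0 ≤ quo s x := by
  unfold quo
  have := one_sub_le_exp_neg' (s * x)
  have : 0 ≤ Real.exp (-(s * x)) - 1 + s * x := by linarith
  positivity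

lemma quo_le {s x : ℝ} (hs : 0 < s) (hx : 0 ≤ x) : quo s x ≤ x ^ 2 := by
  unfold quo
  rw [div_le_iff₀ (by positivity)]
  have := exp_neg_le_quad (u := s * x) (by positivity)
  nlinarith

lemma tendsto_quo {x : ℝ} (hx : 0 ≤ x) :
    Tendsto (fun s => quo s x) (𝓝[>] 0) (𝓝 (x ^ 2)) := by
  have hlow : Tendsto (fun s : ℝ => x ^ 2 - s * x ^ 3) (𝓝[>] 0) (𝓝 (x ^ 2)) := by
    have : Continuous (fun s : ℝ => x ^ 2 - s * x ^ 3) := by fun_prop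
    have := this.tendsto 0
    simp only [zero_mul, sub_zero] at this
    exact this.mono_left nhdsWithin_le_nhds
  have hev : ∀ᶠ s : ℝ in 𝓝[>] 0, s * x ≤ 1 := by
    have : Continuous (fun s : ℝ => s * x) := by fun_prop
    have := this.tendsto 0
    simp only [zero_mul] at this
    exact ((this.eventually (ge_mem_nhds one_pos))).filter_mono nhdsWithin_le_nhds
  refine tendsto_of_tendsto_of_tendsto_of_le_of_le' hlow tendsto_const_nhds ?_ ?_
  · filter_upwards [self_mem_nhdsWithin, hev] with s hs h1
    have hs : 0 < s := hs
    have hu : 0 ≤ s * x := by positivity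
    have := Real.exp_bound (x := -(s * x)) (by rwa [abs_neg, abs_of_nonneg hu]) (n := 3) (by norm_num)
    rw [abs_neg, abs_of_nonneg hu, abs_le] at this
    simp [Finset.sum_range_succ, Nat.factorial] at this
    unfold quo
    rw [le_div_iff₀ (by positivity)]
    have h3 : 0 ≤ (s * x) ^ 3 := by positivity
    nlinarith [this.1]
  · filter_upwards [self_mem_nhdsWithin] with s hs
    exact quo_le hs hx

lemma tendsto_quo_one {x : ℝ} (hx : 0 ≤ x) :
    Tendsto (fun s => (1 - Real.exp (-(s * x))) / s) (𝓝[>] 0) (𝓝 x) := by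
  have hlow : Tendsto (fun s : ℝ => x - s * x ^ 2 / 2) (𝓝[>] 0) (𝓝 x) := by
    have : Continuous (fun s : ℝ => x - s * x ^ 2 / 2) := by fun_prop
    have := this.tendsto 0
    simp only [zero_mul, zero_div, sub_zero] at this
    exact this.mono_left nhdsWithin_le_nhds
  refine tendsto_of_tendsto_of_tendsto_of_le_of_le' hlow tendsto_const_nhds ?_ ?_
  · filter_upwards [self_mem_nhdsWithin] with s hs
    have hs : 0 < s := hs
    rw [le_div_iff₀ hs]
    have := exp_neg_le_quad (u := s * x) (by positivity)
    nlinarith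
  · filter_upwards [self_mem_nhdsWithin] with s hs
    have hs : 0 < s := hs
    rw [div_le_iff₀ hs]
    have := one_sub_le_exp_neg' (s * x)
    nlinarith

section Moments

variable {F : Measure ℝ} [IsProbabilityMeasure F] {μ C : ℝ}

lemma integrable_id_of_sq (h2 : Integrable (fun x : ℝ => x ^ 2) F) :
    Integrable (fun x : ℝ => x) F := by
  refine ((integrable_const (1 : ℝ)).add h2).mono (by fun_prop) (ae_of_all _ fun x => ?_)
  simp only [Pi.add_apply, Real.norm_eq_abs]
  rw [abs_of_nonneg (a := 1 + x ^ 2) (by positivity), abs_le]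
  constructor <;> nlinarith [sq_nonneg (x - 1), sq_nonneg (x + 1)]

lemma integral_quo (h : F (Set.Iio 0) = 0) (hi : Integrable (fun x : ℝ => x) F)
    {s : ℝ} (hs : 0 ≤ s) :
    Integrable (quo s) F ∧ ∫ x, quo s x ∂F = 2 * (LS F s - 1 + (∫ x, x ∂F) * s) / s ^ 2 := by
  have he := integrable_exp_neg h hs
  have h1 : Integrable (fun x => Real.exp (-(s * x)) - 1) F := he.sub (integrable_const _)
  have h2 : Integrable (fun x => s * x) F := hi.const_mul s
  constructor
  · unfold quo
    exact ((h1.add h2).const_mul 2).div_const _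
  · unfold quo
    rw [integral_div, integral_const_mul, integral_add h1 h2, integral_sub he (integrable_const _),
      integral_const_mul]
    simp [LS, mul_comm]

omit [IsProbabilityMeasure F] in
lemma tendsto_integral_quo (h : F (Set.Iio 0) = 0) (h2 : Integrable (fun x : ℝ => x ^ 2) F) :
    Tendsto (fun s => ∫ x, quo s x ∂F) (𝓝[>] 0) (𝓝 (∫ x, x ^ 2 ∂F)) := by
  refine tendsto_integral_filter_of_dominated_convergence (fun x => x ^ 2) ?_ ?_ h2 ?_
  · exact Eventually.of_forall fun s => by unfold quo; fun_prop
  · filter_upwards [self_mem_nhdsWithin] with s hs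
    filter_upwards [ae_nonneg_of_null h] with x hx
    rw [Real.norm_eq_abs, abs_of_nonneg (quo_nonneg _ _)]
    exact quo_le hs hx
  · filter_upwards [ae_nonneg_of_null h] with x hx
    exact tendsto_quo hx

/-- The quadratic bounds come from `0 ≤ quo s x ≤ x²`, integrated. -/
lemma band_of_moments (h : F (Set.Iio 0) = 0) (hm : ∫ x, x ∂F = μ)
    (h2 : Integrable (fun x : ℝ => x ^ 2) F) (hC : ∫ x, x ^ 2 ∂F ≤ C) : Band μ C F := by
  intro s hs
  have hi := integrable_id_of_sq h2
  rcases hs.eq_or_lt with rfl | hs'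
  · simp [LS_zero]
  obtain ⟨hq, hq'⟩ := integral_quo h hi hs
  rw [hm] at hq'
  have h0 : 0 ≤ ∫ x, quo s x ∂F := integral_nonneg fun x => quo_nonneg _ _
  have h1 : ∫ x, quo s x ∂F ≤ ∫ x, x ^ 2 ∂F := by
    refine integral_mono_ae hq h2 ?_
    filter_upwards [ae_nonneg_of_null h] with x hx
    exact quo_le hs' hx
  have h3 : 2 * (LS F s - 1 + μ * s) = (∫ x, quo s x ∂F) * s ^ 2 := by
    rw [hq']; field_simp
  constructor
  · nlinarith [mul_nonneg h0 (sq_nonneg s)]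
  · nlinarith [mul_le_mul_of_nonneg_right (h1.trans hC) (sq_nonneg s)]

/-- Fatou's lemma in the form used here: nonnegative integrands converging pointwise, with
integrals bounded by `M`, have an integrable limit with integral at most `M`. -/
lemma fatou_real {ν : Measure ℝ} {f : ℝ → ℝ → ℝ} {g : ℝ → ℝ} {M : ℝ}
    (hf : ∀ᶠ s in 𝓝[>] (0 : ℝ), Integrable (f s) ν ∧ (∀ᵐ x ∂ν, 0 ≤ f s x) ∧ ∫ x, f s x ∂ν ≤ M)
    (hg : AEStronglyMeasurable g ν) (hg0 : ∀ᵐ x ∂ν, 0 ≤ g x)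
    (hlim : ∀ᵐ x ∂ν, Tendsto (fun s => f s x) (𝓝[>] 0) (𝓝 (g x))) :
    Integrable g ν ∧ ∫ x, g x ∂ν ≤ M := by
  have hM : 0 ≤ M := by
    obtain ⟨s, -, h2, h3⟩ := hf.exists
    exact (integral_nonneg_of_ae h2).trans h3
  obtain ⟨u, hu⟩ := exists_seq_tendsto (𝓝[>] (0 : ℝ))
  obtain ⟨N, hN⟩ := (hu.eventually hf).exists_forall_of_atTop
  have hu' : Tendsto (fun n => u (n + N)) atTop (𝓝[>] (0 : ℝ)) := hu.comp (tendsto_add_atTop_nat N)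
  have key : ∫⁻ x, ENNReal.ofReal (g x) ∂ν ≤ ENNReal.ofReal M := by
    calc ∫⁻ x, ENNReal.ofReal (g x) ∂ν
        = ∫⁻ x, liminf (fun n => ENNReal.ofReal (f (u (n + N)) x)) atTop ∂ν := by
          refine lintegral_congr_ae ?_
          filter_upwards [hlim] with x hx
          exact ((ENNReal.continuous_ofReal.tendsto _).comp (hx.comp hu')).liminf_eq.symm
      _ ≤ liminf (fun n => ∫⁻ x, ENNReal.ofReal (f (u (n + N)) x) ∂ν) atTop :=
          lintegral_liminf_le' fun n => ((hN (n + N) (by omega)).1.aemeasurable).ennreal_ofReal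
      _ ≤ ENNReal.ofReal M := by
          refine liminf_le_of_le (by isBoundedDefault) fun b hb => ?_
          obtain ⟨n, hn⟩ := hb.exists
          obtain ⟨a1, a2, a3⟩ := hN (n + N) (by omega)
          refine hn.trans ?_
          rw [← ofReal_integral_eq_lintegral_ofReal a1 a2]
          exact ENNReal.ofReal_le_ofReal a3
  have hint : Integrable g ν := by
    refine ⟨hg, ?_⟩
    rw [hasFiniteIntegral_iff_ofReal hg0]
    exact key.trans_lt ENNReal.ofReal_lt_top
  refine ⟨hint, ?_⟩
  rw [← ofReal_integral_eq_lintegral_ofReal hint hg0] at key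
  exact (ENNReal.ofReal_le_ofReal_iff hM).1 key

/-- Converse of `band_of_moments`. The bound `C` on the second moment is also true but is not
recorded, since only finiteness is used. -/
lemma moments_of_band (h : F (Set.Iio 0) = 0) (hB : Band μ C F) :
    ∫ x, x ∂F = μ ∧ Integrable (fun x : ℝ => x ^ 2) F := by
  have hae := ae_nonneg_of_null h
  have hquo : ∀ s : ℝ, 0 < s → Integrable (fun x => (1 - Real.exp (-(s * x))) / s) F ∧
      ∫ x, (1 - Real.exp (-(s * x))) / s ∂F = (1 - LS F s) / s := by
    intro s hs
    have he := integrable_exp_neg h hs.le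
    refine ⟨((integrable_const _).sub he).div_const _, ?_⟩
    rw [integral_div, integral_sub (integrable_const _) he]
    simp [LS]
  have hq0 : ∀ s : ℝ, 0 < s → ∀ x : ℝ, 0 ≤ x →
      0 ≤ (1 - Real.exp (-(s * x))) / s ∧ (1 - Real.exp (-(s * x))) / s ≤ x := by
    intro s hs x hx
    have h1 : Real.exp (-(s * x)) ≤ 1 := Real.exp_le_one_iff.2 (by simpa using by positivity)
    have h2 := one_sub_le_exp_neg' (s * x)
    refine ⟨div_nonneg (by linarith) hs.le, ?_⟩
    rw [div_le_iff₀ hs]; linarith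
  have hi : Integrable (fun x : ℝ => x) F := by
    refine (fatou_real (ν := F) (f := fun s x => (1 - Real.exp (-(s * x))) / s) (g := fun x => x)
      (M := μ) ?_ (by fun_prop) hae ?_).1
    · filter_upwards [self_mem_nhdsWithin] with s hs
      have hs : 0 < s := hs
      refine ⟨(hquo s hs).1, ?_, ?_⟩
      · filter_upwards [hae] with x hx using (hq0 s hs x hx).1
      · rw [(hquo s hs).2, div_le_iff₀ hs]
        linarith [(hB s hs.le).1]
    · filter_upwards [hae] with x hx using tendsto_quo_one hx
  have hm : ∫ x, x ∂F = μ := by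
    have l1 : Tendsto (fun s => ∫ x, (1 - Real.exp (-(s * x))) / s ∂F) (𝓝[>] 0)
        (𝓝 (∫ x, x ∂F)) := by
      refine tendsto_integral_filter_of_dominated_convergence (fun x => x) ?_ ?_ hi ?_
      · exact Eventually.of_forall fun s => by fun_prop
      · filter_upwards [self_mem_nhdsWithin] with s hs
        filter_upwards [hae] with x hx
        rw [Real.norm_eq_abs, abs_of_nonneg (hq0 s hs x hx).1]
        exact (hq0 s hs x hx).2
      · filter_upwards [hae] with x hx using tendsto_quo_one hx
    have l2 : Tendsto (fun s => ∫ x, (1 - Real.exp (-(s * x))) / s ∂F) (𝓝[>] 0) (𝓝 μ) := by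
      have hlow : Tendsto (fun s : ℝ => μ - C * s / 2) (𝓝[>] 0) (𝓝 μ) := by
        have : Continuous (fun s : ℝ => μ - C * s / 2) := by fun_prop
        have := this.tendsto 0
        simp only [mul_zero, zero_div, sub_zero] at this
        exact this.mono_left nhdsWithin_le_nhds
      refine tendsto_of_tendsto_of_tendsto_of_le_of_le' hlow tendsto_const_nhds ?_ ?_
      · filter_upwards [self_mem_nhdsWithin] with s hs
        have hs : 0 < s := hs
        rw [(hquo s hs).2, le_div_iff₀ hs]
        nlinarith [(hB s hs.le).2]
      · filter_upwards [self_mem_nhdsWithin] with s hs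
        have hs : 0 < s := hs
        rw [(hquo s hs).2, div_le_iff₀ hs]
        nlinarith [(hB s hs.le).1]
    exact tendsto_nhds_unique l1 l2
  refine ⟨hm, (fatou_real (ν := F) (f := quo) (M := C) ?_ (by fun_prop)
    (ae_of_all _ fun x => sq_nonneg x) ?_).1⟩
  · filter_upwards [self_mem_nhdsWithin] with s hs
    have hs : 0 < s := hs
    obtain ⟨a, b⟩ := integral_quo h hi hs.le
    refine ⟨a, ae_of_all _ fun x => quo_nonneg _ _, ?_⟩
    rw [b, hm, div_le_iff₀ (by positivity)]
    linarith [(hB s hs.le).2]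
  · filter_upwards [hae] with x hx using tendsto_quo hx

end Moments


/-! ### The function `σ` -/

/-- The integrand of `sigmaT`. -/
noncomputable def sigI (F : Measure ℝ) (μ s t : ℝ) : ℝ :=
  if t = 0 then μ * s else (1 - LS F (t * s)) / t

section Sigma

variable {F : Measure ℝ} [IsProbabilityMeasure F] {μ C : ℝ}

lemma measurable_sigI (s : ℝ) : Measurable (sigI F μ s) := by
  unfold sigI
  refine Measurable.ite (measurableSet_singleton 0) measurable_const ?_
  have := (measurable_LS (F := F)).comp (measurable_id.mul_const s)
  exact (measurable_const.sub this).div measurable_id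

lemma sigI_bounds (hμ : 0 ≤ μ) (h : F (Set.Iio 0) = 0) (hB : Band μ C F)
    {s t : ℝ} (hs : 0 ≤ s) (ht : 0 ≤ t) :
    0 ≤ sigI F μ s t ∧ sigI F μ s t ≤ μ * s ∧ μ * s - C * s ^ 2 / 2 * t ≤ sigI F μ s t := by
  unfold sigI
  split_ifs with h0
  · subst h0
    exact ⟨by positivity, le_rfl, by simp⟩
  · have ht' : 0 < t := lt_of_le_of_ne ht (Ne.symm h0)
    have hts : 0 ≤ t * s := by positivity
    have h1 := LS_le_one h hts
    obtain ⟨h2, h3⟩ := hB _ hts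
    refine ⟨div_nonneg (by linarith) ht, ?_, ?_⟩
    · rw [div_le_iff₀ ht']; linarith
    · rw [le_div_iff₀ ht']; nlinarith

variable {FT : Measure ℝ} [IsProbabilityMeasure FT]

lemma integrable_sigI (hμ : 0 ≤ μ) (h : F (Set.Iio 0) = 0) (hB : Band μ C F)
    (hT : FT (Set.Iio 0) = 0) {s : ℝ} (hs : 0 ≤ s) : Integrable (sigI F μ s) FT := by
  refine Integrable.of_bound (C := μ * s) (measurable_sigI s).aestronglyMeasurable ?_
  filter_upwards [ae_nonneg_of_null hT] with t ht
  obtain ⟨a, b, -⟩ := sigI_bounds hμ h hB hs ht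
  rwa [Real.norm_eq_abs, abs_of_nonneg a]

omit [IsProbabilityMeasure FT] in
lemma sigma_nonneg (hμ : 0 ≤ μ) (h : F (Set.Iio 0) = 0) (hB : Band μ C F)
    (hT : FT (Set.Iio 0) = 0) {s : ℝ} (hs : 0 ≤ s) : 0 ≤ sigmaT F FT μ s := by
  refine integral_nonneg_of_ae ?_
  filter_upwards [ae_nonneg_of_null hT] with t ht
  exact (sigI_bounds hμ h hB hs ht).1

lemma sigma_le (hμ : 0 ≤ μ) (h : F (Set.Iio 0) = 0) (hB : Band μ C F)
    (hT : FT (Set.Iio 0) = 0) {s : ℝ} (hs : 0 ≤ s) : sigmaT F FT μ s ≤ μ * s := by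
  have : sigmaT F FT μ s ≤ ∫ _t, μ * s ∂FT := by
    refine integral_mono_ae (integrable_sigI hμ h hB hT hs) (integrable_const _) ?_
    filter_upwards [ae_nonneg_of_null hT] with t ht
    exact (sigI_bounds hμ h hB hs ht).2.1
  simpa using this

end Sigma

/-! ### Second moment and uniqueness -/

section Solutions

variable {F FT : Measure ℝ} [IsProbabilityMeasure F] [IsProbabilityMeasure FT] {μ C : ℝ}

/-- With `k(u) = 2 (F̂(u) - 1 + μ u) / u²`, the functional equation is equivalent to
`∫ t k(ts) dF_T(t) = (k(s) (1 + μ s) - 2 μ²) / F̂(s)`. As `s → 0+`, both sides reveal the second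
moment of `F`. -/
lemma integral_mul_k (hμ : 0 ≤ μ) (h : F (Set.Iio 0) = 0) (hB : Band μ C F)
    (hT : FT (Set.Iio 0) = 0) {s : ℝ} (hs : 0 < s)
    (heq : LS F s = 1 / (1 + sigmaT F FT μ s)) :
    Integrable (fun t => t * (2 * (LS F (t * s) - 1 + μ * (t * s)) / (t * s) ^ 2)) FT ∧
    ∫ t, t * (2 * (LS F (t * s) - 1 + μ * (t * s)) / (t * s) ^ 2) ∂FT =
      (2 * (LS F s - 1 + μ * s) / s ^ 2 * (1 + μ * s) - 2 * μ ^ 2) / LS F s := by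
  have hfun : (fun t => t * (2 * (LS F (t * s) - 1 + μ * (t * s)) / (t * s) ^ 2)) =
      fun t => 2 / s ^ 2 * (μ * s - sigI F μ s t) := by
    ext t
    unfold sigI
    split_ifs with h0
    · simp [h0]
    · field_simp
      ring
  have hi := integrable_sigI hμ h hB hT hs.le
  have hσ := sigma_nonneg hμ h hB hT hs.le
  rw [hfun]
  refine ⟨((integrable_const _).sub hi).const_mul _, ?_⟩
  rw [integral_const_mul, integral_sub (integrable_const _) hi]
  have : ∫ t, sigI F μ s t ∂FT = sigmaT F FT μ s := rfl
  rw [this, heq]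
  simp only [integral_const, probReal_univ, one_smul]
  have h1 : 1 + sigmaT F FT μ s ≠ 0 := by positivity
  field_simp
  ring

/-- A solution forces `m₂ (1 - E[T]) = 2 μ²`, where `m₂` is its second moment; in particular `T`
is integrable. -/
lemma second_moment (hμ : 0 < μ) (hT : FT (Set.Iio 0) = 0) (hS : Sol FT μ F) :
    Integrable (fun t : ℝ => t) FT ∧ (∫ x, x ^ 2 ∂F) * (1 - ∫ t, t ∂FT) = 2 * μ ^ 2 := by
  obtain ⟨-, h, hm, h2, heq⟩ := hS
  set m := ∫ x, x ^ 2 ∂F with hm2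
  have hm0 : 0 ≤ m := integral_nonneg fun x => sq_nonneg x
  have hB : Band μ m F := band_of_moments h hm h2 le_rfl
  set k : ℝ → ℝ := fun u => 2 * (LS F u - 1 + μ * u) / u ^ 2 with hk
  have hk0 : ∀ u, 0 ≤ u → 0 ≤ k u ∧ k u ≤ m := by
    intro u hu
    obtain ⟨a, b⟩ := hB u hu
    rcases hu.eq_or_lt with rfl | hu'
    · simp [hk, hm0]
    · refine ⟨div_nonneg (by linarith) (sq_nonneg _), ?_⟩
      simp only [hk]
      rw [div_le_iff₀ (by positivity)]; linarith
  have hklim : Tendsto k (𝓝[>] 0) (𝓝 m) := by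
    refine (tendsto_integral_quo h h2).congr' ?_
    filter_upwards [self_mem_nhdsWithin] with s hs
    rw [(integral_quo h (integrable_id_of_sq h2) (le_of_lt hs)).2, hm]
  have hid : Tendsto (fun s : ℝ => s) (𝓝[>] 0) (𝓝 0) := nhdsWithin_le_nhds
  have hLS : Tendsto (fun s => LS F s) (𝓝[>] 0) (𝓝 1) := by
    have e1 : Tendsto (fun s : ℝ => 1 - μ * s) (𝓝[>] 0) (𝓝 1) := by
      simpa using (hid.const_mul μ).const_sub 1
    refine tendsto_of_tendsto_of_tendsto_of_le_of_le' e1 tendsto_const_nhds ?_ ?_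
    · filter_upwards [self_mem_nhdsWithin] with s hs using (hB s (le_of_lt hs)).1
    · filter_upwards [self_mem_nhdsWithin] with s hs using LS_le_one h (le_of_lt hs)
  have hJ : ∀ s : ℝ, 0 < s → Integrable (fun t => t * k (t * s)) FT ∧
      ∫ t, t * k (t * s) ∂FT = (k s * (1 + μ * s) - 2 * μ ^ 2) / LS F s := fun s hs =>
    integral_mul_k hμ.le h hB hT hs (heq s hs.le)
  have hJlim : Tendsto (fun s => ∫ t, t * k (t * s) ∂FT) (𝓝[>] 0) (𝓝 (m - 2 * μ ^ 2)) := by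
    have : Tendsto (fun s => (k s * (1 + μ * s) - 2 * μ ^ 2) / LS F s) (𝓝[>] 0)
        (𝓝 ((m * (1 + μ * 0) - 2 * μ ^ 2) / 1)) :=
      ((hklim.mul ((hid.const_mul μ).const_add 1)).sub_const _).div hLS one_ne_zero
    simp only [mul_zero, add_zero, mul_one, div_one] at this
    refine this.congr' ?_
    filter_upwards [self_mem_nhdsWithin] with s hs using (hJ s hs).2.symm
  have hTae := ae_nonneg_of_null hT
  have hptw : ∀ᵐ t ∂FT, Tendsto (fun s => t * k (t * s)) (𝓝[>] 0) (𝓝 (t * m)) := by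
    filter_upwards [hTae] with t ht
    rcases ht.eq_or_lt with rfl | ht'
    · simp
    · refine Tendsto.const_mul t (hklim.comp ?_)
      refine tendsto_nhdsWithin_iff.2 ⟨by simpa using hid.const_mul t, ?_⟩
      filter_upwards [self_mem_nhdsWithin] with s hs using mul_pos ht' hs
  have hbd : ∀ s : ℝ, 0 < s → ∀ t : ℝ, 0 ≤ t → 0 ≤ t * k (t * s) ∧ t * k (t * s) ≤ t * m := by
    intro s hs t ht
    obtain ⟨a, b⟩ := hk0 (t * s) (by positivity)
    exact ⟨mul_nonneg ht a, mul_le_mul_of_nonneg_left b ht⟩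
  have hint : Integrable (fun t => t * m) FT := by
    refine (fatou_real (M := m - 2 * μ ^ 2 + 1) (f := fun s t => t * k (t * s)) ?_
      (by fun_prop) ?_ hptw).1
    · filter_upwards [self_mem_nhdsWithin, hJlim.eventually_le_const
        (lt_add_one (m - 2 * μ ^ 2))] with s hs h1
      refine ⟨(hJ s hs).1, ?_, h1⟩
      filter_upwards [hTae] with t ht using (hbd s hs t ht).1
    · filter_upwards [hTae] with t ht using mul_nonneg ht hm0
  have hJlim' : Tendsto (fun s => ∫ t, t * k (t * s) ∂FT) (𝓝[>] 0) (𝓝 (∫ t, t * m ∂FT)) := by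
    refine tendsto_integral_filter_of_dominated_convergence (fun t => t * m) ?_ ?_ hint hptw
    · filter_upwards [self_mem_nhdsWithin] with s hs using (hJ s hs).1.aestronglyMeasurable
    · filter_upwards [self_mem_nhdsWithin] with s hs
      filter_upwards [hTae] with t ht
      rw [Real.norm_eq_abs, abs_of_nonneg (hbd s hs t ht).1]
      exact (hbd s hs t ht).2
  have hfin := tendsto_nhds_unique hJlim hJlim'
  rw [integral_mul_const] at hfin
  have hmpos : m ≠ 0 := by
    intro h0
    rw [h0] at hfin
    nlinarith
  refine ⟨?_, by linarith⟩
  simpa [hmpos] using hint.mul_const m⁻¹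

/-- A probability measure on `[0,∞)` is determined by its Laplace–Stieltjes transform: the
exponentials `x ↦ e^{-sx}`, `s ≥ 0`, span a separating algebra of bounded continuous functions on
`[0,∞)`. -/
lemma LS_injective {G : Measure ℝ} [IsProbabilityMeasure G] (hF : F (Set.Iio 0) = 0)
    (hG : G (Set.Iio 0) = 0) (hFG : ∀ s, 0 ≤ s → LS F s = LS G s) : F = G := by
  have hmapback : ∀ H : Measure ℝ, H (Set.Iio 0) = 0 →
      (H.map Real.toNNReal).map ((↑) : NNReal → ℝ) = H := by
    intro H hH
    rw [Measure.map_map measurable_coe_nnreal_real measurable_real_toNNReal]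
    refine (Measure.map_congr ?_).trans Measure.map_id
    filter_upwards [ae_nonneg_of_null hH] with x hx
    simpa using hx
  have hLSmap : ∀ H : Measure ℝ, H (Set.Iio 0) = 0 → ∀ s : ℝ,
      ∫ x : NNReal, Real.exp (-(s * x)) ∂(H.map Real.toNNReal) = LS H s := by
    intro H hH s
    have := hmapback H hH
    conv_rhs => rw [← this]
    unfold LS
    rw [integral_map measurable_coe_nnreal_real.aemeasurable (by fun_prop)]
  have : IsProbabilityMeasure (F.map Real.toNNReal) :=
    Measure.isProbabilityMeasure_map measurable_real_toNNReal.aemeasurable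
  have : IsProbabilityMeasure (G.map Real.toNNReal) :=
    Measure.isProbabilityMeasure_map measurable_real_toNNReal.aemeasurable
  let e : NNReal → BoundedContinuousFunction NNReal ℝ := fun s =>
    BoundedContinuousFunction.ofNormedAddCommGroup (fun x : NNReal => Real.exp (-((s : ℝ) * x)))
      (by fun_prop) 1 (by
        intro x
        rw [Real.norm_eq_abs, abs_of_pos (Real.exp_pos _)]
        exact Real.exp_le_one_iff.2 (by simpa using by positivity))
  have he : ∀ s x, e s x = Real.exp (-((s : ℝ) * x)) := fun _ _ => rfl
  let M : Submonoid (BoundedContinuousFunction NNReal ℝ) :=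
    { carrier := Set.range e
      mul_mem' := by
        rintro _ _ ⟨a, rfl⟩ ⟨b, rfl⟩
        refine ⟨a + b, ?_⟩
        ext x
        simp only [he, BoundedContinuousFunction.mul_apply, ← Real.exp_add]
        push_cast
        ring_nf
      one_mem' := ⟨0, by ext x; simp [he]⟩ }
  let A : StarSubalgebra ℝ (BoundedContinuousFunction NNReal ℝ) :=
    { Algebra.adjoin ℝ (M : Set (BoundedContinuousFunction NNReal ℝ)) with
      star_mem' := by
        intro a ha
        have : star a = a := by ext x; simp
        rwa [this] }
  have hkey : F.map Real.toNNReal = G.map Real.toNNReal := by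
    refine ext_of_forall_mem_subalgebra_integral_eq_of_polish (𝕜 := ℝ) (A := A) ?_ ?_
    · intro x y hxy
      refine ⟨fun z => e 1 z, ⟨(e 1 : ContinuousMap NNReal ℝ), ⟨e 1, ?_, rfl⟩, rfl⟩, ?_⟩
      · exact Algebra.subset_adjoin ⟨1, rfl⟩
      · simp only [he]
        intro hc
        have := Real.exp_injective hc
        simp at this
        exact hxy this
    · intro g hg
      have hg' : g ∈ Submodule.span ℝ (M : Set (BoundedContinuousFunction NNReal ℝ)) := by
        have h1 : g ∈ Subalgebra.toSubmodule
          (Algebra.adjoin ℝ (M : Set (BoundedContinuousFunction NNReal ℝ))) := hg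
        rwa [Algebra.adjoin_eq_span, Submonoid.closure_eq] at h1
      clear hg
      induction hg' using Submodule.span_induction with
      | mem x hx =>
        obtain ⟨s, rfl⟩ := hx
        simp only [he]
        rw [hLSmap F hF, hLSmap G hG]
        exact hFG _ s.coe_nonneg
      | zero => simp
      | add x y _ _ hx hy =>
        simp only [BoundedContinuousFunction.coe_add, Pi.add_apply]
        rw [integral_add (x.integrable _) (y.integrable _),
          integral_add (x.integrable _) (y.integrable _), hx, hy]
      | smul c x _ hx =>
        simp only [BoundedContinuousFunction.coe_smul, integral_smul]
        rw [hx]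
  rw [← hmapback F hF, ← hmapback G hG, hkey]

/-- Two solutions coincide. The map `F ↦ 1 / (1 + σ)` contracts the distance
`sup_s |F̂(s) - Ĝ(s)| / s²` by the factor `E[T] < 1`, and this distance is finite between
distributions with the same mean and finite second moments. -/
lemma sol_unique {G : Measure ℝ} [IsProbabilityMeasure G] (hμ : 0 < μ)
    (hT : FT (Set.Iio 0) = 0) (hTi : Integrable (fun t : ℝ => t) FT) (hT1 : ∫ t, t ∂FT < 1)
    (hF : Sol FT μ F) (hG : Sol FT μ G) : F = G := by
  obtain ⟨-, hF0, hFm, hF2, hFe⟩ := hF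
  obtain ⟨-, hG0, hGm, hG2, hGe⟩ := hG
  refine LS_injective hF0 hG0 ?_
  set C := max (∫ x, x ^ 2 ∂F) (∫ x, x ^ 2 ∂G) with hC
  have hC0 : 0 ≤ C := (integral_nonneg fun x => sq_nonneg x).trans (le_max_left _ _)
  have hBF : Band μ C F := band_of_moments hF0 hFm hF2 (le_max_left _ _)
  have hBG : Band μ C G := band_of_moments hG0 hGm hG2 (le_max_right _ _)
  set ρ := ∫ t, t ∂FT with hρ
  have hTae := ae_nonneg_of_null hT
  have hρ0 : 0 ≤ ρ := integral_nonneg_of_ae hTae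
  have key : ∀ n : ℕ, ∀ s, 0 ≤ s → |LS F s - LS G s| ≤ C * s ^ 2 / 2 * ρ ^ n := by
    intro n
    induction n with
    | zero =>
      intro s hs
      rw [abs_le]
      have h1 := hBF s hs
      have h2 := hBG s hs
      constructor <;> simp <;> linarith
    | succ n ih =>
      intro s hs
      have iF := integrable_sigI hμ.le hF0 hBF hT hs
      have iG := integrable_sigI hμ.le hG0 hBG hT hs
      have pF := sigma_nonneg hμ.le hF0 hBF hT hs
      have pG := sigma_nonneg hμ.le hG0 hBG hT hs
      have h1 : |LS F s - LS G s| ≤ |sigmaT F FT μ s - sigmaT G FT μ s| := by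
        rw [hFe s hs, hGe s hs]
        set a := sigmaT F FT μ s
        set b := sigmaT G FT μ s
        have : 1 / (1 + a) - 1 / (1 + b) = (b - a) / ((1 + a) * (1 + b)) := by
          field_simp; ring
        rw [this, abs_div, abs_sub_comm, abs_of_pos (a := (1 + a) * (1 + b)) (by positivity)]
        exact div_le_self (abs_nonneg _) (by nlinarith [mul_nonneg pF pG])
      have h2 : sigmaT F FT μ s - sigmaT G FT μ s = ∫ t, (sigI F μ s t - sigI G μ s t) ∂FT :=
        (integral_sub iF iG).symm
      have h3 : |∫ t, (sigI F μ s t - sigI G μ s t) ∂FT| ≤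
          ∫ t, t * (C * s ^ 2 / 2 * ρ ^ n) ∂FT := by
        rw [← Real.norm_eq_abs]
        refine norm_integral_le_of_norm_le (hTi.mul_const _) ?_
        filter_upwards [hTae] with t ht
        unfold sigI
        split_ifs with h0
        · simp [h0]
        · have ht' : 0 < t := lt_of_le_of_ne ht (Ne.symm h0)
          have := ih (t * s) (by positivity)
          have e : (1 - LS F (t * s)) / t - (1 - LS G (t * s)) / t =
            -(LS F (t * s) - LS G (t * s)) / t := by ring
          rw [e, Real.norm_eq_abs, abs_div, abs_neg, abs_of_pos ht', div_le_iff₀ ht']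
          refine this.trans (le_of_eq (by ring))
      rw [integral_mul_const] at h3
      calc _ ≤ _ := h1
        _ ≤ ρ * (C * s ^ 2 / 2 * ρ ^ n) := by rw [h2]; exact h3
        _ = _ := by ring
  intro s hs
  have hl : Tendsto (fun n : ℕ => C * s ^ 2 / 2 * ρ ^ n) atTop (𝓝 0) := by
    simpa using (tendsto_pow_atTop_nhds_zero_of_lt_one hρ0 hT1).const_mul (C * s ^ 2 / 2)
  have := ge_of_tendsto' hl fun n => key n s hs
  exact sub_eq_zero.1 (abs_eq_zero.1 (le_antisymm this (abs_nonneg _)))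

end Solutions

/-! ### Compactness and continuity -/

section Compactness

variable {μ C : ℝ}

/-- Prokhorov's theorem for probability measures on `[0,∞)` with mean `μ` and second moment at
most `C`, with convergence expressed through transforms. -/
lemma exists_subseq_LS {F : ℕ → Measure ℝ} (hP : ∀ n, IsProbabilityMeasure (F n))
    (h0 : ∀ n, F n (Set.Iio 0) = 0) (hB : ∀ n, Band μ C (F n)) :
    ∃ φ : ℕ → ℕ, StrictMono φ ∧ ∃ G : Measure ℝ, IsProbabilityMeasure G ∧ G (Set.Iio 0) = 0 ∧
      Band μ C G ∧ ∀ s, 0 ≤ s → Tendsto (fun n => LS (F (φ n)) s) atTop (𝓝 (LS G s)) := by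
  let P : ℕ → ProbabilityMeasure ℝ := fun n => ⟨F n, hP n⟩
  have hmarkov : ∀ n, ∀ r : ℝ, 0 < r → F n {x | r < ‖x‖} ≤ ENNReal.ofReal (μ / r) := by
    intro n r hr
    obtain ⟨hm, h2⟩ := moments_of_band (h0 n) (hB n)
    have hae := ae_nonneg_of_null (h0 n)
    have h1 := mul_meas_ge_le_integral_of_nonneg hae (integrable_id_of_sq h2) r
    have h3 : (F n).real {x | r < ‖x‖} ≤ (F n).real {x | r ≤ x} := by
      refine ENNReal.toReal_mono (measure_ne_top _ _) (measure_mono_ae ?_)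
      filter_upwards [hae] with x hx hxr
      have : r < ‖x‖ := hxr
      rw [Real.norm_eq_abs, abs_of_nonneg hx] at this
      exact this.le
    rw [← ofReal_measureReal]
    refine ENNReal.ofReal_le_ofReal (h3.trans ?_)
    rw [le_div_iff₀ hr, mul_comm]
    exact h1.trans hm.le
  have htight : IsTightMeasureSet {((ν : ProbabilityMeasure ℝ) : Measure ℝ) | ν ∈ Set.range P} := by
    refine isTightMeasureSet_of_tendsto_measure_norm_gt ?_
    have hl : Tendsto (fun r : ℝ => ENNReal.ofReal (μ / r)) atTop (𝓝 0) := by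
      have := (ENNReal.continuous_ofReal.tendsto 0).comp
        (tendsto_const_nhds (x := μ).div_atTop tendsto_id)
      rw [ENNReal.ofReal_zero] at this
      exact this
    refine tendsto_of_tendsto_of_tendsto_of_le_of_le' tendsto_const_nhds hl
      (Eventually.of_forall fun _ => zero_le) ?_
    filter_upwards [eventually_gt_atTop 0] with r hr
    refine iSup₂_le ?_
    rintro _ ⟨_, ⟨n, rfl⟩, rfl⟩
    exact hmarkov n r hr
  obtain ⟨Q, -, φ, hφ, hlim⟩ := (isCompact_closure_of_isTightMeasureSet htight).tendsto_subseq
    (x := P) (fun n => subset_closure ⟨n, rfl⟩)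
  have hQ0 : (Q : Measure ℝ) (Set.Iio 0) = 0 := by
    have := ProbabilityMeasure.le_liminf_measure_open_of_tendsto hlim (isOpen_Iio (a := (0 : ℝ)))
    refine le_antisymm (this.trans ?_) zero_le
    have hz : ∀ n, ((P ∘ φ) n : Measure ℝ) (Set.Iio 0) = 0 := fun n => h0 _
    simp only [hz, liminf_const, le_refl]
  have hLSmax : ∀ H : Measure ℝ, H (Set.Iio 0) = 0 → ∀ s : ℝ,
      LS H s = ∫ x, Real.exp (-(s * max x 0)) ∂H := by
    intro H hH s
    refine integral_congr_ae ?_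
    filter_upwards [ae_nonneg_of_null hH] with x hx
    rw [max_eq_left hx]
  have hLSlim : ∀ s, 0 ≤ s → Tendsto (fun n => LS (F (φ n)) s) atTop (𝓝 (LS Q s)) := by
    intro s hs
    have h1 := ProbabilityMeasure.tendsto_iff_forall_integral_tendsto.1 hlim
      (BoundedContinuousFunction.ofNormedAddCommGroup (fun x : ℝ => Real.exp (-(s * max x 0)))
      (by fun_prop) 1 (by
        intro x
        rw [Real.norm_eq_abs, abs_of_pos (Real.exp_pos _)]
        exact Real.exp_le_one_iff.2 (by simpa using by positivity)))
    rw [hLSmax _ hQ0]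
    refine h1.congr fun n => ?_
    rw [hLSmax _ (h0 _)]
    rfl
  refine ⟨φ, hφ, Q, inferInstance, hQ0, fun s hs => ⟨?_, ?_⟩, hLSlim⟩
  · exact ge_of_tendsto' (hLSlim s hs) fun n => (hB _ s hs).1
  · exact le_of_tendsto' (hLSlim s hs) fun n => (hB _ s hs).2

/-- Continuity of `σ` in both `F` and the distribution of `T`, the latter along the truncations
`max T ε` with `ε → 0`. -/
lemma tendsto_sigma {F : ℕ → Measure ℝ} {G FT : Measure ℝ} [IsProbabilityMeasure FT]
    (hμ : 0 < μ) (hP : ∀ n, IsProbabilityMeasure (F n))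
    (h0 : ∀ n, F n (Set.Iio 0) = 0) (hB : ∀ n, Band μ C (F n))
    (hT : FT (Set.Iio 0) = 0)
    (hlim : ∀ s, 0 ≤ s → Tendsto (fun n => LS (F n) s) atTop (𝓝 (LS G s)))
    {ε : ℕ → ℝ} (hε : Tendsto ε atTop (𝓝 0)) {s : ℝ} (hs : 0 ≤ s) :
    Tendsto (fun n => ∫ t, sigI (F n) μ s (max t (ε n)) ∂FT) atTop (𝓝 (sigmaT G FT μ s)) := by
  refine tendsto_integral_of_dominated_convergence (fun _ => μ * s) ?_ (integrable_const _) ?_ ?_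
  · intro n
    have := hP n
    exact ((measurable_sigI s).comp (measurable_id.max measurable_const)).aestronglyMeasurable
  · intro n
    have := hP n
    filter_upwards [ae_nonneg_of_null hT] with t ht
    obtain ⟨a, b, -⟩ := sigI_bounds hμ.le (h0 n) (hB n) hs (t := max t (ε n)) (by positivity)
    rwa [Real.norm_eq_abs, abs_of_nonneg a]
  · filter_upwards [ae_nonneg_of_null hT] with t ht
    rcases ht.eq_or_lt with rfl | ht'
    · simp only [↓reduceIte]
      have hl : Tendsto (fun n => μ * s - C * s ^ 2 / 2 * max 0 (ε n)) atTop (𝓝 (μ * s)) := by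
        have h1 : Tendsto (fun n => max 0 (ε n)) atTop (𝓝 0) := by
          simpa using (tendsto_const_nhds (x := (0 : ℝ))).max hε
        simpa using (h1.const_mul (C * s ^ 2 / 2)).const_sub (μ * s)
      refine tendsto_of_tendsto_of_tendsto_of_le_of_le hl tendsto_const_nhds ?_ ?_
      · intro n
        have := hP n
        exact (sigI_bounds hμ.le (h0 n) (hB n) hs (t := max 0 (ε n)) (by positivity)).2.2
      · intro n
        have := hP n
        exact (sigI_bounds hμ.le (h0 n) (hB n) hs (t := max 0 (ε n)) (by positivity)).2.1
    · rw [if_neg ht'.ne']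
      have h1 := ((hlim (t * s) (by positivity)).const_sub 1).div_const t
      refine h1.congr' ?_
      filter_upwards [hε.eventually_lt_const ht'] with n hn
      rw [max_eq_left hn.le, sigI, if_neg ht'.ne']

end Compactness

/-! ### Existence for `T` bounded away from zero -/

section Step

/-- `E[1/T]`. -/
noncomputable def lam (FT : Measure ℝ) : ℝ := ∫ t, 1 / t ∂FT

/-- One step of the iteration for the fixed point, for `T` bounded away from `0`. With
`λ = E[1/T]`, this is the mixture giving mass `1 / (1 + λ)` to `0` and mass `λ / (1 + λ)` to the
law of `X + T' Y`, where `X`, `Y` have law `F` and `T'` has law `dF_T(t) / (λ t)`, all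
independent. -/
noncomputable def step (FT F : Measure ℝ) : Measure ℝ :=
  ENNReal.ofReal (1 / (1 + lam FT)) • (Measure.dirac 0 +
    (F.prod ((FT.withDensity fun t => ENNReal.ofReal (1 / t)).prod F)).map
      (fun p => p.1 + p.2.1 * p.2.2))

variable {F FT : Measure ℝ} [IsProbabilityMeasure F] [IsProbabilityMeasure FT] {μ C ε : ℝ}

omit [IsProbabilityMeasure FT] in
lemma ae_ge_of_null (h : FT (Set.Iio ε) = 0) : ∀ᵐ x ∂FT, ε ≤ x := by
  rw [ae_iff]
  convert h using 2
  ext x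
  simp

lemma integrable_inv (hε : 0 < ε) (hT : FT (Set.Iio ε) = 0) :
    Integrable (fun t : ℝ => 1 / t) FT := by
  refine Integrable.of_bound (C := 1 / ε) (by fun_prop) ?_
  filter_upwards [ae_ge_of_null hT] with t ht
  rw [Real.norm_eq_abs, abs_of_pos (by have := hε.trans_le ht; positivity)]
  exact one_div_le_one_div_of_le hε ht

omit [IsProbabilityMeasure FT] in
lemma lam_nonneg (hε : 0 < ε) (hT : FT (Set.Iio ε) = 0) : 0 ≤ lam FT := by
  refine integral_nonneg_of_ae ?_
  filter_upwards [ae_ge_of_null hT] with t ht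
  have := hε.trans_le ht
  simp only [Pi.zero_apply]
  positivity

omit [IsProbabilityMeasure FT] in
lemma null_of_null (hε : 0 < ε) (hT : FT (Set.Iio ε) = 0) : FT (Set.Iio 0) = 0 :=
  measure_mono_null (Set.Iio_subset_Iio hε.le) hT

lemma lintegral_inv (hε : 0 < ε) (hT : FT (Set.Iio ε) = 0) :
    (FT.withDensity fun t => ENNReal.ofReal (1 / t)) Set.univ = ENNReal.ofReal (lam FT) := by
  rw [withDensity_apply _ MeasurableSet.univ, Measure.restrict_univ, lam,
    ofReal_integral_eq_lintegral_ofReal (integrable_inv hε hT)]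
  filter_upwards [ae_ge_of_null hT] with t ht
  have := hε.trans_le ht
  simp only [Pi.zero_apply]
  positivity

lemma finite_density (hε : 0 < ε) (hT : FT (Set.Iio ε) = 0) :
    IsFiniteMeasure (FT.withDensity fun t => ENNReal.ofReal (1 / t)) :=
  ⟨by rw [lintegral_inv hε hT]; exact ENNReal.ofReal_lt_top⟩

lemma step_prob (hε : 0 < ε) (hT : FT (Set.Iio ε) = 0) : IsProbabilityMeasure (step FT F) := by
  have := finite_density hε hT
  have hl := lam_nonneg hε hT
  constructor
  rw [step, Measure.smul_apply, Measure.add_apply, Measure.map_apply (by fun_prop) .univ,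
    Set.preimage_univ, ← Set.univ_prod_univ, Measure.prod_prod, ← Set.univ_prod_univ,
    Measure.prod_prod, lintegral_inv hε hT]
  simp only [measure_univ, one_mul, mul_one, smul_eq_mul]
  rw [← ENNReal.ofReal_one, ← ENNReal.ofReal_add zero_le_one hl, ← ENNReal.ofReal_mul (by positivity)]
  congr 1
  field_simp

omit [IsProbabilityMeasure FT] in
lemma ae_density_nonneg (hε : 0 < ε) (hT : FT (Set.Iio ε) = 0) :
    ∀ᵐ t ∂(FT.withDensity fun t => ENNReal.ofReal (1 / t)), 0 ≤ t :=
  (withDensity_absolutelyContinuous _ _).ae_le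
    ((ae_ge_of_null hT).mono fun _ ht => hε.le.trans ht)

omit [IsProbabilityMeasure F] in
lemma step_null [SFinite F] (h : F (Set.Iio 0) = 0) (hε : 0 < ε) (hT : FT (Set.Iio ε) = 0) :
    step FT F (Set.Iio 0) = 0 := by
  have := finite_density hε hT
  have hae := ae_nonneg_of_null h
  have hW := ae_density_nonneg hε hT
  rw [step, Measure.smul_apply, Measure.add_apply, Measure.map_apply (by fun_prop) measurableSet_Iio]
  have h1 : (Measure.dirac (0 : ℝ)) (Set.Iio 0) = 0 := by simp
  have h2 : ∀ᵐ p ∂(F.prod ((FT.withDensity fun t => ENNReal.ofReal (1 / t)).prod F)),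
      0 ≤ p.1 + p.2.1 * p.2.2 := by
    have a1 := Measure.quasiMeasurePreserving_fst.ae
      (μa := F.prod ((FT.withDensity fun t => ENNReal.ofReal (1 / t)).prod F)) hae
    have a2 := Measure.quasiMeasurePreserving_snd.ae
      (μa := F.prod ((FT.withDensity fun t => ENNReal.ofReal (1 / t)).prod F))
      (Measure.quasiMeasurePreserving_fst.ae
      (μa := (FT.withDensity fun t => ENNReal.ofReal (1 / t)).prod F) hW)
    have a3 := Measure.quasiMeasurePreserving_snd.ae
      (μa := F.prod ((FT.withDensity fun t => ENNReal.ofReal (1 / t)).prod F))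
      (Measure.quasiMeasurePreserving_snd.ae
      (μa := (FT.withDensity fun t => ENNReal.ofReal (1 / t)).prod F) hae)
    filter_upwards [a1, a2, a3] with p b1 b2 b3
    have := mul_nonneg b2 b3
    linarith
  rw [h1, zero_add]
  rw [ae_iff] at h2
  convert smul_zero _
  convert h2 using 2
  ext p
  simp

/-- `∫ F̂(ts)/t dF_T(t)`, the transform of the jump measure in `σ`. -/
noncomputable def jump (FT F : Measure ℝ) (s : ℝ) : ℝ := ∫ t, 1 / t * LS F (t * s) ∂FT

lemma integrable_jump (h : F (Set.Iio 0) = 0) (hε : 0 < ε) (hT : FT (Set.Iio ε) = 0) {s : ℝ}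
    (hs : 0 ≤ s) : Integrable (fun t => 1 / t * LS F (t * s)) FT := by
  refine (integrable_inv hε hT).mono ?_ ?_
  · have := (measurable_LS (F := F)).comp (measurable_id.mul_const s)
    exact ((measurable_const.div measurable_id).mul this).aestronglyMeasurable
  · filter_upwards [ae_ge_of_null hT] with t ht
    have ht0 := hε.trans_le ht
    rw [norm_mul]
    refine mul_le_of_le_one_right (norm_nonneg _) ?_
    rw [Real.norm_eq_abs, abs_of_nonneg (LS_nonneg _)]
    exact LS_le_one h (by positivity)

omit [IsProbabilityMeasure F] [IsProbabilityMeasure FT] in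
lemma jump_nonneg (hε : 0 < ε) (hT : FT (Set.Iio ε) = 0) (s : ℝ) : 0 ≤ jump FT F s := by
  refine integral_nonneg_of_ae ?_
  filter_upwards [ae_ge_of_null hT] with t ht
  have ht0 := hε.trans_le ht
  exact mul_nonneg (by positivity) (LS_nonneg _)

/-- Splitting the integrand `(1 - F̂(ts))/t` into two integrable parts; this needs `E[1/T]` finite. -/
lemma sigma_eq_lam_sub_jump (h : F (Set.Iio 0) = 0) (hε : 0 < ε) (hT : FT (Set.Iio ε) = 0) {s : ℝ}
    (hs : 0 ≤ s) : sigmaT F FT μ s = lam FT - jump FT F s := by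
  rw [lam, jump, ← integral_sub (integrable_inv hε hT) (integrable_jump h hε hT hs)]
  refine integral_congr_ae ?_
  filter_upwards [ae_ge_of_null hT] with t ht
  have ht0 := hε.trans_le ht
  simp only [if_neg ht0.ne']
  ring

/-- The transform of `step FT F`. Hence a fixed point satisfies `F̂(s) (1 + λ) = 1 + F̂(s) j(s)` with
`j` the jump transform, that is, `F̂(s) (1 + σ(s)) = 1`. -/
lemma LS_step (h : F (Set.Iio 0) = 0) (hε : 0 < ε) (hT : FT (Set.Iio ε) = 0) {s : ℝ}
    (hs : 0 ≤ s) : LS (step FT F) s * (1 + lam FT) = 1 + LS F s * jump FT F s := by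
  have := finite_density hε hT
  have hl := lam_nonneg hε hT
  have hW := ae_density_nonneg hε hT
  have hae := ae_nonneg_of_null h
  set W := FT.withDensity fun t => ENNReal.ofReal (1 / t) with hWdef
  have hint2 : Integrable (fun q : ℝ × ℝ => Real.exp (-(q.1 * s * q.2))) (W.prod F) := by
    refine Integrable.of_bound (C := 1) (by fun_prop) ?_
    filter_upwards [Measure.quasiMeasurePreserving_fst.ae (μa := W.prod F) hW,
      Measure.quasiMeasurePreserving_snd.ae (μa := W.prod F) hae] with q h1 h2
    rw [Real.norm_eq_abs, abs_of_pos (Real.exp_pos _)]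
    exact Real.exp_le_one_iff.2 (by simpa using by positivity)
  have hQ : ∫ p, Real.exp (-(s * (p.1 + p.2.1 * p.2.2))) ∂(F.prod (W.prod F)) =
      LS F s * jump FT F s := by
    have e : (fun p : ℝ × ℝ × ℝ => Real.exp (-(s * (p.1 + p.2.1 * p.2.2)))) =
        fun p => Real.exp (-(s * p.1)) * Real.exp (-(p.2.1 * s * p.2.2)) := by
      ext p
      rw [← Real.exp_add]
      ring_nf
    rw [e, integral_prod_mul (fun x => Real.exp (-(s * x)))
      (fun q : ℝ × ℝ => Real.exp (-(q.1 * s * q.2))), integral_prod _ hint2]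
    congr 1
    rw [hWdef, integral_withDensity_eq_integral_toReal_smul (by fun_prop)
      (ae_of_all _ fun _ => ENNReal.ofReal_lt_top)]
    refine integral_congr_ae ?_
    filter_upwards [ae_ge_of_null hT] with t ht
    have ht0 := hε.trans_le ht
    rw [ENNReal.toReal_ofReal (by positivity)]
    rfl
  have hintQ : Integrable (fun x => Real.exp (-(s * x)))
      ((F.prod (W.prod F)).map (fun p => p.1 + p.2.1 * p.2.2)) := by
    rw [integrable_map_measure (by fun_prop) (by fun_prop)]
    have := (integrable_exp_neg h hs).mul_prod hint2
    refine this.congr (ae_of_all _ fun p => ?_)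
    simp only [Function.comp_apply]
    rw [← Real.exp_add]
    ring_nf
  have hdir : Integrable (fun x => Real.exp (-(s * x))) (Measure.dirac (0 : ℝ)) :=
    integrable_exp_neg (by simp) hs
  rw [LS, step, integral_smul_measure, ← hWdef, integral_add_measure hdir hintQ, integral_dirac,
    integral_map (by fun_prop) (by fun_prop), hQ, ENNReal.toReal_ofReal (by positivity)]
  simp only [mul_zero, neg_zero, Real.exp_zero, smul_eq_mul]
  field_simp

/-- The band with `C (1 - E[T]) ≥ 2 μ²` is invariant under the iteration. -/
lemma step_band (hμ : 0 < μ) (h : F (Set.Iio 0) = 0) (hB : Band μ C F) (hε : 0 < ε)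
    (hT : FT (Set.Iio ε) = 0) (hTi : Integrable (fun t : ℝ => t) FT)
    (hCρ : 2 * μ ^ 2 ≤ C * (1 - ∫ t, t ∂FT)) : Band μ C (step FT F) := by
  intro s hs
  have hT0 := null_of_null hε hT
  have hl := lam_nonneg hε hT
  have hj := jump_nonneg (F := F) hε hT s
  have hst := LS_step h hε hT hs
  have hsj := sigma_eq_lam_sub_jump (μ := μ) h hε hT hs
  have hσ0 := sigma_nonneg hμ.le h hB hT0 hs
  have hi := integrable_sigI hμ.le h hB hT0 hs
  have hσ1 := sigma_le hμ.le h hB hT0 hs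
  have hσ2 : μ * s - C * s ^ 2 / 2 * ∫ t, t ∂FT ≤ sigmaT F FT μ s := by
    have : ∫ t, (μ * s - C * s ^ 2 / 2 * t) ∂FT ≤ ∫ t, sigI F μ s t ∂FT := by
      refine integral_mono_ae ((integrable_const _).sub (hTi.const_mul _)) hi ?_
      filter_upwards [ae_nonneg_of_null hT0] with t ht
      exact (sigI_bounds hμ.le h hB hs ht).2.2
    have e : ∫ t, C * s ^ 2 / 2 * t ∂FT = C * s ^ 2 / 2 * ∫ t, t ∂FT := integral_const_mul _ _
    rw [integral_sub (integrable_const _) (hTi.const_mul _), e] at this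
    simp only [integral_const, probReal_univ, smul_eq_mul, one_mul] at this
    exact this
  obtain ⟨hf1, hf2⟩ := hB s hs
  have hf3 := LS_le_one h hs
  have hf0 := LS_nonneg (F := F) s
  generalize sigmaT F FT μ s = σ at *
  generalize LS (step FT F) s = g at *
  generalize LS F s = f at *
  generalize jump FT F s = j at *
  generalize lam FT = l at *
  generalize ∫ t, t ∂FT = ρ at *
  obtain rfl : j = l - σ := by linarith
  have hl1 : 0 < 1 + l := by linarith
  constructor
  · refine le_of_mul_le_mul_right ?_ hl1
    rw [hst]
    nlinarith [mul_le_mul_of_nonneg_right hf1 hl, mul_le_mul_of_nonneg_right hf3 hσ0]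
  · refine le_of_mul_le_mul_right ?_ hl1
    rw [hst]
    set U := 1 - μ * s + C * s ^ 2 / 2 with hU
    have e1 : f * (l - σ) ≤ U * (l - σ) := mul_le_mul_of_nonneg_right hf2 hj
    have e2 : σ ^ 2 ≤ (μ * s) ^ 2 := by gcongr
    -- since `σ ≥ μ s - C s² E[T] / 2` and `μ² ≤ C (1 - E[T]) / 2`
    have e3 : 1 - σ + σ ^ 2 ≤ U := by
      nlinarith [mul_le_mul_of_nonneg_right hCρ (sq_nonneg s)]
    have e4 : 1 ≤ U * (1 + σ) := by
      have : (1 - σ + σ ^ 2) * (1 + σ) ≤ U * (1 + σ) :=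
        mul_le_mul_of_nonneg_right e3 (by linarith)
      nlinarith [pow_nonneg hσ0 3]
    linarith

/-- Monotonicity of the iteration for the pointwise order of transforms. -/
lemma step_mono {G : Measure ℝ} [IsProbabilityMeasure G] (h : F (Set.Iio 0) = 0)
    (hG : G (Set.Iio 0) = 0) (hε : 0 < ε) (hT : FT (Set.Iio ε) = 0)
    (hFG : ∀ s, 0 ≤ s → LS F s ≤ LS G s) :
    ∀ s, 0 ≤ s → LS (step FT F) s ≤ LS (step FT G) s := by
  intro s hs
  have hl := lam_nonneg hε hT
  refine le_of_mul_le_mul_right ?_ (show 0 < 1 + lam FT by linarith)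
  rw [LS_step h hε hT hs, LS_step hG hε hT hs]
  have : jump FT F s ≤ jump FT G s := by
    refine integral_mono_ae (integrable_jump h hε hT hs) (integrable_jump hG hε hT hs) ?_
    filter_upwards [ae_ge_of_null hT] with t ht
    have ht0 := hε.trans_le ht
    exact mul_le_mul_of_nonneg_left (hFG _ (by positivity)) (by positivity)
  linarith [mul_le_mul (hFG s hs) this (jump_nonneg hε hT s) (LS_nonneg s)]

/-- Existence when `T` is bounded away from `0`: the iteration started at the point mass at `μ`
increases to a fixed point. -/
lemma exists_of_bounded_below (hμ : 0 < μ) (hC : μ ^ 2 ≤ C) (hε : 0 < ε)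
    (hT : FT (Set.Iio ε) = 0) (hTi : Integrable (fun t : ℝ => t) FT)
    (hCρ : 2 * μ ^ 2 ≤ C * (1 - ∫ t, t ∂FT)) :
    ∃ G : Measure ℝ, IsProbabilityMeasure G ∧ G (Set.Iio 0) = 0 ∧ Band μ C G ∧
      ∀ s, 0 ≤ s → LS G s = 1 / (1 + sigmaT G FT μ s) := by
  have hT0 := null_of_null hε hT
  have hl := lam_nonneg hε hT
  let F : ℕ → Measure ℝ := fun n => (step FT)^[n] (Measure.dirac μ)
  have hF0 : F 0 = Measure.dirac μ := rfl
  have hFs : ∀ n, F (n + 1) = step FT (F n) := fun n => Function.iterate_succ_apply' _ _ _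
  have hLS0 : ∀ s, LS (F 0) s = Real.exp (-(s * μ)) := by
    intro s
    rw [hF0, LS, integral_dirac]
  have hall : ∀ n, IsProbabilityMeasure (F n) ∧ F n (Set.Iio 0) = 0 ∧ Band μ C (F n) := by
    intro n
    induction n with
    | zero =>
      refine ⟨by rw [hF0]; infer_instance, by rw [hF0]; simp [hμ.le], fun s hs => ?_⟩
      rw [hLS0]
      have h1 := one_sub_le_exp_neg' (s * μ)
      have h2 := exp_neg_le_quad (u := s * μ) (by positivity)
      constructor
      · linarith
      · nlinarith [mul_le_mul_of_nonneg_right hC (sq_nonneg s)]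
    | succ n ih =>
      obtain ⟨a, b, c⟩ := ih
      rw [hFs]
      exact ⟨step_prob hε hT, step_null b hε hT, step_band hμ b c hε hT hTi hCρ⟩
  have hP : ∀ n, IsProbabilityMeasure (F n) := fun n => (hall n).1
  have hN := fun n => (hall n).2.1
  have hB := fun n => (hall n).2.2
  have hmono : ∀ n s, 0 ≤ s → LS (F n) s ≤ LS (F (n + 1)) s := by
    intro n
    induction n with
    | zero =>
      intro s hs
      refine le_of_mul_le_mul_right ?_ (show 0 < 1 + lam FT by linarith)
      rw [hFs, LS_step (hN 0) hε hT hs]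
      have h1 := sigma_eq_lam_sub_jump (μ := μ) (hN 0) hε hT hs
      have hσ1 := sigma_le hμ.le (hN 0) (hB 0) hT0 hs
      have h2 : LS (F 0) s * (1 + μ * s) ≤ 1 := by
        rw [hLS0]
        have e1 := Real.add_one_le_exp (s * μ)
        have e2 : Real.exp (-(s * μ)) * Real.exp (s * μ) = 1 := by rw [← Real.exp_add]; simp
        calc _ ≤ Real.exp (-(s * μ)) * Real.exp (s * μ) :=
              mul_le_mul_of_nonneg_left (by linarith) (Real.exp_pos _).le
          _ = 1 := e2
      have h3 : jump FT (F 0) s = lam FT - sigmaT (F 0) FT μ s := by linarith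
      rw [h3]
      nlinarith [mul_le_mul_of_nonneg_left hσ1 (LS_nonneg (F := F 0) s)]
    | succ n ih =>
      intro s hs
      have := step_mono (hN n) (hN (n + 1)) hε hT ih s hs
      rwa [← hFs, ← hFs] at this
  obtain ⟨φ, hφ, G, hGP, hG0, hGB, hGlim⟩ := exists_subseq_LS hP hN hB
  have hlim : ∀ s, 0 ≤ s → Tendsto (fun n => LS (F n) s) atTop (𝓝 (LS G s)) := by
    intro s hs
    have hm : Monotone (fun n => LS (F n) s) := monotone_nat_of_le_succ fun n => hmono n s hs
    have hbdd : BddAbove (Set.range fun n => LS (F n) s) :=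
      ⟨1, by rintro _ ⟨n, rfl⟩; exact LS_le_one (hN n) hs⟩
    have h1 := tendsto_atTop_ciSup hm hbdd
    rwa [tendsto_nhds_unique (hGlim s hs) (h1.comp hφ.tendsto_atTop)]
  refine ⟨G, hGP, hG0, hGB, fun s hs => ?_⟩
  have hσlim : Tendsto (fun n => sigmaT (F n) FT μ s) atTop (𝓝 (sigmaT G FT μ s)) := by
    refine (tendsto_sigma hμ hP hN hB hT0 hlim (ε := fun _ => 0)
      tendsto_const_nhds hs).congr fun n => ?_
    refine integral_congr_ae ?_
    filter_upwards [ae_nonneg_of_null hT0] with t ht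
    rw [max_eq_left ht]
    rfl
  have hσ := sigma_nonneg hμ.le hG0 hGB hT0 hs
  have l1 : Tendsto (fun n => LS (F (n + 1)) s * (1 + lam FT)) atTop
      (𝓝 (LS G s * (1 + lam FT))) := ((hlim s hs).comp (tendsto_add_atTop_nat 1)).mul_const _
  have l2 : Tendsto (fun n => LS (F (n + 1)) s * (1 + lam FT)) atTop
      (𝓝 (1 + LS G s * (lam FT - sigmaT G FT μ s))) := by
    refine (((hlim s hs).mul (hσlim.const_sub (lam FT))).const_add 1).congr fun n => ?_
    rw [hFs, LS_step (hN n) hε hT hs, sigma_eq_lam_sub_jump (hN n) hε hT hs]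
    ring
  have := tendsto_nhds_unique l1 l2
  rw [eq_div_iff (by positivity)]
  linarith

end Step

/-! ### Existence for general `T`, and the theorem -/

/-- Existence when `E[T] < 1`: the solutions for `max T ε` have uniformly bounded second moments,
so they have a limit point as `ε → 0`, and it solves the equation for `T`. -/
lemma exists_sol {FT : Measure ℝ} [IsProbabilityMeasure FT] {μ : ℝ} (hμ : 0 < μ)
    (hT : FT (Set.Iio 0) = 0) (hTi : Integrable (fun t : ℝ => t) FT) (hT1 : ∫ t, t ∂FT < 1) :
    ∃ F, Sol FT μ F := by
  set ρ := ∫ t, t ∂FT with hρ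
  have hTae := ae_nonneg_of_null hT
  have hρ0 : 0 ≤ ρ := integral_nonneg_of_ae hTae
  -- `C (1 - ρ') ≥ 2 μ²` for every `ρ' ≤ (1 + ρ) / 2`
  set C := 4 * μ ^ 2 / (1 - ρ) with hC
  have hC1 : C * (1 - ρ) = 4 * μ ^ 2 := by rw [hC]; field_simp [(sub_pos.2 hT1).ne']
  have hC0 : 0 ≤ C := by have := sub_pos.2 hT1; positivity
  have hCμ : μ ^ 2 ≤ C := by nlinarith [mul_nonneg hC0 hρ0, sq_nonneg μ]
  let ε : ℕ → ℝ := fun n => (1 - ρ) / 2 * (1 / ((n : ℝ) + 1))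
  have hε0 : ∀ n, 0 < ε n := fun n => by have := sub_pos.2 hT1; positivity
  have hε1 : ∀ n, ε n ≤ (1 - ρ) / 2 := by
    intro n
    refine mul_le_of_le_one_right (by linarith) ?_
    rw [div_le_one (by positivity)]
    linarith [(Nat.cast_nonneg n : (0 : ℝ) ≤ n)]
  have hε : Tendsto ε atTop (𝓝 0) := by
    have := (tendsto_one_div_add_atTop_nhds_zero_nat (𝕜 := ℝ)).const_mul ((1 - ρ) / 2)
    rwa [mul_zero] at this
  have hex : ∀ n, ∃ G : Measure ℝ, IsProbabilityMeasure G ∧ G (Set.Iio 0) = 0 ∧ Band μ C G ∧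
      ∀ s, 0 ≤ s → LS G s = 1 / (1 + ∫ t, sigI G μ s (max t (ε n)) ∂FT) := by
    intro n
    have hmeas : Measurable (fun t : ℝ => max t (ε n)) := measurable_id.max measurable_const
    have : IsProbabilityMeasure (FT.map fun t => max t (ε n)) :=
      Measure.isProbabilityMeasure_map hmeas.aemeasurable
    have hmi : Integrable (fun t => max t (ε n)) FT := hTi.sup (integrable_const _)
    have hnull : (FT.map fun t => max t (ε n)) (Set.Iio (ε n)) = 0 := by
      rw [Measure.map_apply hmeas measurableSet_Iio]
      convert measure_empty (μ := FT)
      ext t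
      simp
    have hle : ∫ t, t ∂(FT.map fun t => max t (ε n)) ≤ (1 + ρ) / 2 := by
      rw [integral_map hmeas.aemeasurable (by fun_prop)]
      calc ∫ t, max t (ε n) ∂FT ≤ ∫ t, (t + ε n) ∂FT := by
            refine integral_mono_ae hmi (hTi.add (integrable_const _)) ?_
            filter_upwards [hTae] with t ht
            exact max_le (by linarith [hε0 n]) (by linarith)
        _ = ρ + ε n := by rw [integral_add hTi (integrable_const _)]; simp [hρ]
        _ ≤ _ := by linarith [hε1 n]
    obtain ⟨G, a, b, c, d⟩ := exists_of_bounded_below hμ hCμ (hε0 n) hnull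
      ((integrable_map_measure (by fun_prop) hmeas.aemeasurable).2 hmi)
      (by nlinarith [mul_le_mul_of_nonneg_left hle hC0])
    refine ⟨G, a, b, c, fun s hs => ?_⟩
    rw [d s hs]
    have : sigmaT G (FT.map fun t => max t (ε n)) μ s = ∫ t, sigI G μ s (max t (ε n)) ∂FT := by
      change ∫ t, sigI G μ s t ∂(FT.map fun t => max t (ε n)) = _
      rw [integral_map hmeas.aemeasurable (measurable_sigI s).aestronglyMeasurable]
    rw [this]
  choose F hP hN hB heq using hex
  obtain ⟨φ, hφ, G, hGP, hG0, hGB, hGlim⟩ := exists_subseq_LS hP hN hB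
  obtain ⟨hm, h2⟩ := moments_of_band hG0 hGB
  refine ⟨G, hGP, hG0, hm, h2, fun s hs => ?_⟩
  have hσlim := tendsto_sigma hμ (fun n => hP (φ n)) (fun n => hN (φ n)) (fun n => hB (φ n)) hT
    hGlim (ε := fun n => ε (φ n)) (hε.comp hφ.tendsto_atTop) hs
  have hσ := sigma_nonneg hμ.le hG0 hGB hT hs
  refine tendsto_nhds_unique (hGlim s hs) ?_
  simp only [heq _ s hs]
  exact tendsto_const_nhds.div (hσlim.const_add 1) (by positivity)

/-- Corollary 3: `E[T] < 1` holds iff the compound-exponential type functional equation has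
exactly one solution with mean `μ` and finite second moment; moreover, the solution has
variance `((1 + E[T])/(1 − E[T])) μ²`. -/
theorem stmt3 (μ : ℝ) (hμ : 0 < μ) (FT : Measure ℝ) [IsProbabilityMeasure FT]
    (hT : FT (Set.Iio 0) = 0) :
    ((∫⁻ t, ENNReal.ofReal t ∂FT) < 1 ↔ (∃! F : Measure ℝ, Sol FT μ F)) ∧
    ((∫⁻ t, ENNReal.ofReal t ∂FT) < 1 → ∀ F : Measure ℝ, Sol FT μ F →
      (∫ x, x ^ 2 ∂F) - (∫ x, x ∂F) ^ 2 =
        (1 + (∫ t, t ∂FT)) / (1 - (∫ t, t ∂FT)) * μ ^ 2) := by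
  have hTae := ae_nonneg_of_null hT
  have hlt : (∫⁻ t, ENNReal.ofReal t ∂FT) < 1 ↔
      Integrable (fun t : ℝ => t) FT ∧ ∫ t, t ∂FT < 1 := by
    constructor
    · intro h
      have hi : Integrable (fun t : ℝ => t) FT :=
        ⟨by fun_prop, (hasFiniteIntegral_iff_ofReal hTae).2 (h.trans ENNReal.one_lt_top)⟩
      refine ⟨hi, ?_⟩
      rw [← ofReal_integral_eq_lintegral_ofReal hi hTae] at h
      exact ENNReal.ofReal_lt_one.1 h
    · rintro ⟨hi, h⟩
      rw [← ofReal_integral_eq_lintegral_ofReal hi hTae]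
      exact ENNReal.ofReal_lt_one.2 h
  refine ⟨⟨fun h => ?_, ?_⟩, fun h F hF => ?_⟩
  · obtain ⟨hi, h1⟩ := hlt.1 h
    obtain ⟨F, hF⟩ := exists_sol hμ hT hi h1
    have := hF.1
    refine ⟨F, hF, fun G hG => ?_⟩
    have := hG.1
    exact sol_unique hμ hT hi h1 hG hF
  · rintro ⟨F, hF, -⟩
    have := hF.1
    obtain ⟨hi, h2⟩ := second_moment hμ hT hF
    refine hlt.2 ⟨hi, ?_⟩
    have hm0 : 0 ≤ ∫ x, x ^ 2 ∂F := integral_nonneg fun x => sq_nonneg x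
    by_contra! hge
    nlinarith [mul_nonneg hm0 (sub_nonneg.2 hge), pow_pos hμ 2]
  · have := hF.1
    obtain ⟨hi, h1⟩ := hlt.1 h
    obtain ⟨-, h2⟩ := second_moment hμ hT hF
    have h3 : (1 - ∫ t, t ∂FT) ≠ 0 := (sub_pos.2 h1).ne'
    rw [hF.2.2.1, div_mul_eq_mul_div, eq_div_iff h3]
    linear_combination h2
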